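/- Every analytic self-map φ : D → D induces a well-defined bounded composition operator C_φ on H²_h(D), with operator norm ‖C_φ‖ ≤ 2·√((1+|φ(0)|)/(1−|φ(0)|)). -/

import Mathlib

noncomputable section
open Complex Metric Filter Set MeasureTheory
open scoped Real ComplexConjugate ComplexInnerProductSpace

/-- The underlying `ℓ²` space of square-summable complex sequences. -/
abbrev ℓ2 : Type := lp (fun _ : ℕ => ℂ) 2

/-- The Hilbert space `H²ₕ(𝔻)` of complex-valued harmonic functions on the unit disc,
represented by the pair of coefficient sequences `(aₙ)ₙ` and `(conj bₙ)ₙ`,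
with the `L²` product norm. -/
abbrev Hh : Type := WithLp 2 (ℓ2 × ℓ2)

/-- The analytic-part Taylor coefficients `aₙ` of `f = h + conj g`. -/
def aCoef (f : Hh) : ℕ → ℂ := fun n => (WithLp.equiv 2 (ℓ2 × ℓ2) f).1 n

/-- The co-analytic-part Taylor coefficients `bₙ` of `f = h + conj g`. -/
def bCoef (f : Hh) : ℕ → ℂ := fun n => conj ((WithLp.equiv 2 (ℓ2 × ℓ2) f).2 n)

/-- The harmonic function on the disc determined by an element of `H²ₕ(𝔻)`:
`f(z) = Σ aₙ zⁿ + conj (Σ bₙ zⁿ)`. -/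
def toFun (f : Hh) (z : ℂ) : ℂ :=
  (∑' n : ℕ, aCoef f n * z ^ n) + conj (∑' n : ℕ, bCoef f n * z ^ n)

lemma memℓ2_pow {α : ℂ} (h : ‖α‖ < 1) : Memℓp (fun n : ℕ => α ^ n) 2 := by
  apply memℓp_gen
  have h2 : Summable (fun n : ℕ => (‖α‖ ^ 2) ^ n) :=
    summable_geometric_of_lt_one (by positivity) (by nlinarith [norm_nonneg α])
  refine h2.congr fun n => ?_
  rw [show ((2 : ENNReal)).toReal = ((2 : ℕ) : ℝ) by norm_num, Real.rpow_natCast, norm_pow,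
    ← pow_mul, ← pow_mul, Nat.mul_comm]

/-- The reproducing kernel `K_α(z) = 1/(1 - conj α · z) + 1/(1 - α · conj z)` of `H²ₕ(𝔻)`,
as an element of `Hh` (junk value `0` when `α` is outside the unit disc). -/
def kernel (α : ℂ) : Hh :=
  if h : ‖α‖ < 1 then
    (WithLp.equiv 2 (ℓ2 × ℓ2)).symm
      (⟨fun n => (conj α) ^ n, memℓ2_pow (by simpa using h)⟩,
       ⟨fun n => α ^ n, memℓ2_pow h⟩)
  else 0

/-- `F = C_φ f`, i.e. `F` is obtained from `f = h + conj g` by composing each part with `φ`: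
on the unit disc, the analytic part of `F` is `h ∘ φ` and the co-analytic part is `conj (g ∘ φ)`. -/
def Represents (φ : ℂ → ℂ) (f F : Hh) : Prop :=
  ∀ z ∈ ball (0 : ℂ) 1,
    ((∑' n : ℕ, aCoef F n * z ^ n) = ∑' n : ℕ, aCoef f n * (φ z) ^ n) ∧
    ((∑' n : ℕ, bCoef F n * z ^ n) = ∑' n : ℕ, bCoef f n * (φ z) ^ n)

/-- The Poisson kernel `P_r(x)` for the unit disc. -/
def poisson (r x : ℝ) : ℝ := (1 - r ^ 2) / (1 - 2 * r * Real.cos x + r ^ 2)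

/-- A real-valued function is harmonic on a set: it is `C²` there and its Laplacian vanishes. -/
def HarmonicOnDisc (u : ℂ → ℝ) (s : Set ℂ) : Prop :=
  ContDiffOn ℝ 2 u s ∧
    ∀ z ∈ s, iteratedFDeriv ℝ 2 u z ![1, 1] + iteratedFDeriv ℝ 2 u z ![Complex.I, Complex.I] = 0


def PwSum (c : ℕ → ℂ) : Prop := ∀ x : ℝ, 0 ≤ x → x < 1 → Summable fun n => ‖c n‖ * x ^ n

def PwS (c : ℕ → ℂ) (z : ℂ) : ℂ := ∑' n, c n * z ^ n

def shft (c : ℕ → ℂ) : ℕ → ℂ := fun n => c (n + 1)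

lemma PwSum.shft {c : ℕ → ℂ} (h : PwSum c) : PwSum (shft c) := by
  intro x hx hx1
  have hy0 : 0 < (x + 1) / 2 := by linarith
  have hy := h ((x + 1) / 2) hy0.le (by linarith)
  have hy' := ((summable_nat_add_iff 1).2 hy).mul_right ((x + 1) / 2)⁻¹
  refine Summable.of_nonneg_of_le (fun n => by positivity) (fun n => ?_) hy'
  rw [pow_succ, mul_assoc, mul_assoc, mul_inv_cancel₀ hy0.ne', mul_one]
  have : x ^ n ≤ ((x + 1) / 2) ^ n := pow_le_pow_left₀ hx (by linarith) n
  exact mul_le_mul_of_nonneg_left this (norm_nonneg _)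

lemma PwSum.summable {c : ℕ → ℂ} (h : PwSum c) {z : ℂ} (hz : ‖z‖ < 1) :
    Summable fun n => c n * z ^ n := by
  apply Summable.of_norm
  simpa using h ‖z‖ (norm_nonneg _) hz

lemma PwSum.step {c : ℕ → ℂ} (h : PwSum c) {z : ℂ} (hz : ‖z‖ < 1) :
    PwS c z = c 0 + z * PwS (_root_.shft c) z := by
  unfold PwS
  rw [(h.summable hz).tsum_eq_zero_add, ← tsum_mul_left]
  simp only [pow_zero, mul_one, _root_.shft]
  congr 1
  exact tsum_congr fun n => by ring

lemma PwSum.stepR {c : ℕ → ℂ} (h : PwSum c) {x : ℝ} (hx : 0 ≤ x) (hx1 : x < 1) :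
    ∑' n, ‖c n‖ * x ^ n = ‖c 0‖ + x * ∑' n, ‖_root_.shft c n‖ * x ^ n := by
  rw [(h x hx hx1).tsum_eq_zero_add, ← tsum_mul_left]
  simp only [pow_zero, mul_one, _root_.shft]
  congr 1
  exact tsum_congr fun n => by ring

lemma PwSum.norm_le {c : ℕ → ℂ} (h : PwSum c) {z : ℂ} {x : ℝ} (hz : ‖z‖ ≤ x) (hx1 : x < 1) :
    ‖PwS c z‖ ≤ ∑' n, ‖c n‖ * x ^ n := by
  have hx : 0 ≤ x := (norm_nonneg z).trans hz
  refine tsum_of_norm_bounded (h x hx hx1).hasSum fun n => ?_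
  rw [norm_mul, norm_pow]
  gcongr

lemma PwSum.diff {c : ℕ → ℂ} (h : PwSum c) : DifferentiableOn ℂ (PwS c) (ball 0 1) := by
  intro z hz
  have hz1 : ‖z‖ < 1 := by simpa using hz
  obtain ⟨x, hx, hx1⟩ := exists_between hz1
  have hx0 : 0 ≤ x := (norm_nonneg z).trans hx.le
  have := differentiableOn_tsum_of_summable_norm (F := fun n z => c n * z ^ n) (U := ball 0 x)
    (h x hx0 hx1) (fun n => by fun_prop) isOpen_ball (fun n w hw => by
      have : ‖w‖ ≤ x := by simpa using (mem_ball.1 hw).le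
      rw [norm_mul, norm_pow]
      gcongr)
  exact (this.differentiableAt (isOpen_ball.mem_nhds (by simpa using hx))).differentiableWithinAt

lemma sphere_sub {ρ : ℝ} (h0 : 0 < ρ) (h1 : ρ < 1) : sphere (0 : ℂ) |ρ| ⊆ ball 0 1 := by
  intro z hz
  rw [abs_of_pos h0] at hz
  simp at hz ⊢
  linarith

lemma ci_sq {g : ℂ → ℂ} (hg : DifferentiableOn ℂ g (ball 0 1)) {ρ : ℝ} (h0 : 0 < ρ) (h1 : ρ < 1) :
    CircleIntegrable (fun z => ‖g z‖ ^ 2) 0 ρ :=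
  ContinuousOn.circleIntegrable' ((hg.continuousOn.mono (sphere_sub h0 h1)).norm.pow 2)

lemma avg_add {g : ℂ → ℂ} (hg : DifferentiableOn ℂ g (ball 0 1)) (c : ℂ) {ρ : ℝ}
    (h0 : 0 < ρ) (h1 : ρ < 1) :
    Real.circleAverage (fun z => ‖c + g z‖ ^ 2) 0 ρ =
      ‖c‖ ^ 2 + 2 * (conj c * g 0).re + Real.circleAverage (fun z => ‖g z‖ ^ 2) 0 ρ := by
  have hc : DifferentiableOn ℂ (fun z => conj c * g z) (ball 0 1) := hg.const_mul _
  have hmv : Real.circleAverage (fun z => conj c * g z) 0 ρ = conj c * g 0 := by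
    apply DiffContOnCl.circleAverage (f := fun z => conj c * g z)
    apply DifferentiableOn.diffContOnCl
    apply hc.mono
    rw [closure_ball _ (by positivity), abs_of_pos h0]
    exact closedBall_subset_ball h1
  have hci : CircleIntegrable (fun z => conj c * g z) 0 ρ :=
    ContinuousOn.circleIntegrable' (hc.continuousOn.mono (sphere_sub h0 h1))
  have hre := Complex.reCLM.circleAverage_comp_comm hci
  rw [hmv] at hre
  have hci2 : CircleIntegrable (Complex.reCLM ∘ (fun z => conj c * g z)) 0 ρ :=
    ContinuousOn.circleIntegrable' (Complex.reCLM.continuous.comp_continuousOn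
      (hc.continuousOn.mono (sphere_sub h0 h1)))
  have e : (fun z => ‖c + g z‖ ^ 2) = (fun _ => ‖c‖ ^ 2) +
      ((2 : ℝ) • (Complex.reCLM ∘ (fun z => conj c * g z)) + fun z => ‖g z‖ ^ 2) := by
    funext z
    simp only [Pi.add_apply, Pi.smul_apply, Function.comp, Complex.reCLM_apply, smul_eq_mul,
      ← Complex.normSq_eq_norm_sq, Complex.normSq_add]
    simp
    ring
  rw [e, Real.circleAverage_add (circleIntegrable_const _ _ _)
    (hci2.const_smul.add (ci_sq hg h0 h1)), Real.circleAverage_add hci2.const_smul (ci_sq hg h0 h1),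
    Real.circleAverage_smul, hre, Real.circleAverage_const]
  simp
  ring

lemma bessel {ρ : ℝ} (h0 : 0 < ρ) (h1 : ρ < 1) (N : ℕ) : ∀ {c : ℕ → ℂ}, PwSum c →
    ∑ n ∈ Finset.range N, ‖c n‖ ^ 2 * (ρ ^ 2) ^ n ≤
      Real.circleAverage (fun z => ‖PwS c z‖ ^ 2) 0 ρ := by
  induction N with
  | zero =>
    intro c _
    simp only [Finset.range_zero, Finset.sum_empty]
    exact Real.circleAverage_nonneg_of_nonneg fun _ _ => by positivity
  | succ N ih =>
    intro c h
    have hs := ih h.shft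
    have e1 : Real.circleAverage (fun z => ‖PwS c z‖ ^ 2) 0 ρ =
        Real.circleAverage (fun z => ‖c 0 + z * PwS (shft c) z‖ ^ 2) 0 ρ := by
      apply Real.circleAverage_congr_sphere
      intro z hz
      have : ‖z‖ < 1 := by simpa using sphere_sub h0 h1 hz
      simp only [h.step this]
    have e2 : Real.circleAverage (fun z => ‖z * PwS (shft c) z‖ ^ 2) 0 ρ =
        ρ ^ 2 * Real.circleAverage (fun z => ‖PwS (shft c) z‖ ^ 2) 0 ρ := by
      rw [← smul_eq_mul, ← Real.circleAverage_smul]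
      apply Real.circleAverage_congr_sphere
      intro z hz
      have : ‖z‖ = ρ := by simpa [abs_of_pos h0] using hz
      simp [this, mul_pow]
    rw [e1, avg_add (g := fun z => z * PwS (shft c) z) (differentiableOn_id.mul h.shft.diff) _ h0 h1]
    rw [e2, Finset.sum_range_succ']
    simp only [zero_mul, mul_zero, Complex.zero_re, pow_zero, mul_one, add_zero]
    have e3 : ∑ k ∈ Finset.range N, ‖c (k + 1)‖ ^ 2 * (ρ ^ 2) ^ (k + 1) =
        ρ ^ 2 * ∑ n ∈ Finset.range N, ‖shft c n‖ ^ 2 * (ρ ^ 2) ^ n := by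
      rw [Finset.mul_sum]
      exact Finset.sum_congr rfl fun n _ => by simp only [shft]; ring
    rw [e3]
    have := mul_le_mul_of_nonneg_left hs (sq_nonneg ρ)
    linarith

section
variable {φ : ℂ → ℂ} (hφ : DifferentiableOn ℂ φ (ball (0 : ℂ) 1))
    (hmap : MapsTo φ (ball (0 : ℂ) 1) (ball (0 : ℂ) 1))

def EE (φ : ℂ → ℂ) (ρ : ℝ) (c : ℕ → ℂ) : ℝ := Real.circleAverage (fun z => ‖PwS c (φ z)‖ ^ 2) 0 ρ

def VV (x : ℝ) (c : ℕ → ℂ) : ℝ := ∑' n, ‖c n‖ * x ^ n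

lemma alg (r a v C E : ℝ) (hr : 0 ≤ r) (hr1 : r < 1) (hC : C = (1 + r) / (1 - r)) :
    a ^ 2 + 2 * (a * (r * v)) + E + r * (a + r * v) ^ 2 ≤ C * a ^ 2 + E + r * v ^ 2 := by
  have h : 0 < 1 - r := by linarith
  have e : C * a ^ 2 + E + r * v ^ 2 - (a ^ 2 + 2 * (a * (r * v)) + E + r * (a + r * v) ^ 2)
      = r * (1 + r) * (a - (1 - r) * v) ^ 2 / (1 - r) := by
    rw [hC]; field_simp; ring
  have : 0 ≤ r * (1 + r) * (a - (1 - r) * v) ^ 2 / (1 - r) := by positivity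
  linarith

include hφ hmap in
lemma EE_step {ρ : ℝ} (h0 : 0 < ρ) (h1 : ρ < 1) {c : ℕ → ℂ} (h : PwSum c) :
    EE φ ρ c + ‖φ 0‖ * VV ‖φ 0‖ c ^ 2 ≤
      (1 + ‖φ 0‖) / (1 - ‖φ 0‖) * ‖c 0‖ ^ 2 +
        (EE φ ρ (shft c) + ‖φ 0‖ * VV ‖φ 0‖ (shft c) ^ 2) := by
  have hb : ∀ z ∈ ball (0 : ℂ) 1, ‖φ z‖ < 1 := fun z hz => by simpa using hmap hz
  have hr1 : ‖φ 0‖ < 1 := hb 0 (by simp)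
  have hd : DifferentiableOn ℂ (fun z => PwS (shft c) (φ z)) (ball 0 1) :=
    h.shft.diff.comp hφ hmap
  have hdm : DifferentiableOn ℂ (fun z => φ z * PwS (shft c) (φ z)) (ball 0 1) := hφ.mul hd
  have e1 : EE φ ρ c =
      Real.circleAverage (fun z => ‖c 0 + φ z * PwS (shft c) (φ z)‖ ^ 2) 0 ρ := by
    apply Real.circleAverage_congr_sphere
    intro z hz
    simp only [h.step (hb z (sphere_sub h0 h1 hz))]
  have e2 : Real.circleAverage (fun z => ‖φ z * PwS (shft c) (φ z)‖ ^ 2) 0 ρ ≤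
      EE φ ρ (shft c) := by
    apply Real.circleAverage_mono (ci_sq hdm h0 h1) (ci_sq hd h0 h1)
    intro z hz
    have := (hb z (sphere_sub h0 h1 hz)).le
    rw [norm_mul]
    have h3 : ‖φ z‖ * ‖PwS (shft c) (φ z)‖ ≤ ‖PwS (shft c) (φ z)‖ :=
      mul_le_of_le_one_left (norm_nonneg _) this
    gcongr
  have e3 : (conj (c 0) * (φ 0 * PwS (shft c) (φ 0))).re ≤
      ‖c 0‖ * (‖φ 0‖ * VV ‖φ 0‖ (shft c)) := by
    refine (Complex.re_le_norm _).trans ?_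
    rw [norm_mul, norm_mul, RCLike.norm_conj]
    have := h.shft.norm_le (le_refl ‖φ 0‖) hr1
    unfold VV
    gcongr
  have e4 : VV ‖φ 0‖ c = ‖c 0‖ + ‖φ 0‖ * VV ‖φ 0‖ (shft c) := h.stepR (norm_nonneg _) hr1
  rw [e1, avg_add hdm _ h0 h1, e4]
  have := alg ‖φ 0‖ ‖c 0‖ (VV ‖φ 0‖ (shft c)) _ (EE φ ρ (shft c)) (norm_nonneg _) hr1 rfl
  linarith

include hφ hmap in
lemma EE_iter {ρ : ℝ} (h0 : 0 < ρ) (h1 : ρ < 1) {c : ℕ → ℂ} (h : PwSum c) (N : ℕ) :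
    PwSum (fun n => c (n + N)) ∧ EE φ ρ c + ‖φ 0‖ * VV ‖φ 0‖ c ^ 2 ≤
      (1 + ‖φ 0‖) / (1 - ‖φ 0‖) * ∑ n ∈ Finset.range N, ‖c n‖ ^ 2 +
        (EE φ ρ (fun n => c (n + N)) + ‖φ 0‖ * VV ‖φ 0‖ (fun n => c (n + N)) ^ 2) := by
  induction N with
  | zero => simpa using h
  | succ N ih =>
    obtain ⟨hp, hi⟩ := ih
    have e : shft (fun n => c (n + N)) = fun n => c (n + (N + 1)) := by
      funext n; simp only [shft]; congr 1; ring
    have hst := EE_step hφ hmap h0 h1 hp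
    rw [e] at hst
    refine ⟨e ▸ hp.shft, ?_⟩
    rw [Finset.sum_range_succ, mul_add]
    simp only [zero_add] at hst
    linarith

lemma VV_tendsto {c : ℕ → ℂ} (hc : Tendsto c atTop (nhds 0)) {x : ℝ} (hx : 0 ≤ x) (hx1 : x < 1) :
    Tendsto (fun N => VV x (fun n => c (n + N))) atTop (nhds 0) := by
  obtain ⟨B, hB⟩ := (Metric.isBounded_range_of_tendsto c hc).exists_norm_le
  have hB' : ∀ n, ‖c n‖ ≤ B := fun n => hB _ ⟨n, rfl⟩
  have := tendsto_tsum_of_dominated_convergence (𝓕 := atTop)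
    (f := fun N n => ‖c (n + N)‖ * x ^ n) (g := fun _ => (0 : ℝ)) (bound := fun n => B * x ^ n)
    ((summable_geometric_of_lt_one hx hx1).mul_left B) (fun n => by
      have h2 : Tendsto (fun N => c (n + N)) atTop (nhds 0) :=
        hc.comp (tendsto_atTop_mono (fun N => Nat.le_add_left N n) tendsto_id)
      simpa using h2.norm.mul_const (x ^ n))
    (Eventually.of_forall fun N n => by
      rw [norm_mul, norm_norm, norm_pow, Real.norm_of_nonneg hx]
      have := hB' (n + N)
      gcongr)
  simpa [VV] using this

include hφ hmap in
lemma EE_le {ρ : ℝ} (h0 : 0 < ρ) (h1 : ρ < 1) {c : ℕ → ℂ} (h : PwSum c)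
    (hc : Summable fun n => ‖c n‖ ^ 2) :
    EE φ ρ c ≤ (1 + ‖φ 0‖) / (1 - ‖φ 0‖) * ∑' n, ‖c n‖ ^ 2 := by
  have hb : ∀ z ∈ ball (0 : ℂ) 1, ‖φ z‖ < 1 := fun z hz => by simpa using hmap hz
  have hr1 : ‖φ 0‖ < 1 := hb 0 (by simp)
  have hc0 : Tendsto c atTop (nhds 0) := by
    have := hc.tendsto_atTop_zero.sqrt
    simp only [Real.sqrt_sq (norm_nonneg _), Real.sqrt_zero] at this
    exact tendsto_zero_iff_norm_tendsto_zero.2 this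
  obtain ⟨R, hR0, hR1, hR⟩ : ∃ R : ℝ, 0 ≤ R ∧ R < 1 ∧ ∀ z ∈ sphere (0 : ℂ) |ρ|, ‖φ z‖ ≤ R := by
    obtain ⟨w, hw, hm⟩ := (isCompact_sphere (0 : ℂ) |ρ|).exists_isMaxOn
      (NormedSpace.sphere_nonempty.2 (abs_nonneg ρ))
      ((hφ.continuousOn.mono (sphere_sub h0 h1)).norm)
    exact ⟨‖φ w‖, norm_nonneg _, hb w (sphere_sub h0 h1 hw), fun z hz => hm hz⟩
  have hC : 0 ≤ (1 + ‖φ 0‖) / (1 - ‖φ 0‖) := div_nonneg (by positivity) (by linarith)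
  have key : ∀ N, EE φ ρ c ≤ (1 + ‖φ 0‖) / (1 - ‖φ 0‖) * ∑' n, ‖c n‖ ^ 2 +
      (VV R (fun n => c (n + N)) ^ 2 + ‖φ 0‖ * VV ‖φ 0‖ (fun n => c (n + N)) ^ 2) := by
    intro N
    obtain ⟨hp, hi⟩ := EE_iter hφ hmap h0 h1 h N
    have hE : EE φ ρ (fun n => c (n + N)) ≤ VV R (fun n => c (n + N)) ^ 2 := by
      apply Real.circleAverage_mono_on_of_le_circle (ci_sq (hp.diff.comp hφ hmap) h0 h1)
      intro z hz
      exact pow_le_pow_left₀ (norm_nonneg _) (hp.norm_le (hR z hz) hR1) 2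
    have hs : ∑ n ∈ Finset.range N, ‖c n‖ ^ 2 ≤ ∑' n, ‖c n‖ ^ 2 :=
      hc.sum_le_tsum _ fun _ _ => by positivity
    have := mul_le_mul_of_nonneg_left hs hC
    have : 0 ≤ ‖φ 0‖ * VV ‖φ 0‖ c ^ 2 := by positivity
    linarith
  have hlim := ((VV_tendsto hc0 hR0 hR1).pow 2).add
    (((VV_tendsto hc0 (norm_nonneg (φ 0)) hr1).pow 2).const_mul ‖φ 0‖)
  have hlim2 := hlim.const_add ((1 + ‖φ 0‖) / (1 - ‖φ 0‖) * ∑' n, ‖c n‖ ^ 2)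
  simp only [ne_eq, OfNat.ofNat_ne_zero, not_false_eq_true, zero_pow, mul_zero, add_zero] at hlim2
  exact ge_of_tendsto' hlim2 key

include hφ hmap in
lemma coef_bound {a c : ℕ → ℂ} (ha : PwSum a) (hsa : Summable fun n => ‖a n‖ ^ 2) (hc : PwSum c)
    (heq : ∀ z ∈ ball (0 : ℂ) 1, PwS c z = PwS a (φ z)) (N : ℕ) :
    ∑ n ∈ Finset.range N, ‖c n‖ ^ 2 ≤ (1 + ‖φ 0‖) / (1 - ‖φ 0‖) * ∑' n, ‖a n‖ ^ 2 := by
  have key : ∀ ρ ∈ Ioo (0 : ℝ) 1, ∑ n ∈ Finset.range N, ‖c n‖ ^ 2 * (ρ ^ 2) ^ n ≤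
      (1 + ‖φ 0‖) / (1 - ‖φ 0‖) * ∑' n, ‖a n‖ ^ 2 := by
    intro ρ hρ
    refine (bessel hρ.1 hρ.2 N hc).trans ((le_of_eq ?_).trans (EE_le hφ hmap hρ.1 hρ.2 ha hsa))
    apply Real.circleAverage_congr_sphere
    intro z hz
    simp only [heq z (sphere_sub hρ.1 hρ.2 hz)]
  have hcont : Continuous fun ρ : ℝ => ∑ n ∈ Finset.range N, ‖c n‖ ^ 2 * (ρ ^ 2) ^ n := by
    fun_prop
  have ht : Tendsto (fun ρ : ℝ => ∑ n ∈ Finset.range N, ‖c n‖ ^ 2 * (ρ ^ 2) ^ n)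
      (nhdsWithin 1 (Iio 1)) (nhds (∑ n ∈ Finset.range N, ‖c n‖ ^ 2)) := by
    have := (hcont.tendsto 1).mono_left (nhdsWithin_le_nhds (s := Iio 1))
    simpa using this
  exact le_of_tendsto ht (mem_of_superset (Ioo_mem_nhdsLT zero_lt_one) key)

include hφ hmap in
lemma exists_coef {a : ℕ → ℂ} (ha : PwSum a) : ∃ c : ℕ → ℂ, PwSum c ∧
    ∀ z ∈ ball (0 : ℂ) 1, PwS c z = PwS a (φ z) := by
  have hd : DifferentiableOn ℂ (fun z => PwS a (φ z)) (ball 0 1) := ha.diff.comp hφ hmap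
  refine ⟨fun n => (n.factorial : ℂ)⁻¹ * iteratedDeriv n (fun z => PwS a (φ z)) 0, ?_, ?_⟩
  · intro x hx hx1
    have hx' : (x : ℂ) ∈ ball (0 : ℂ) 1 := by simpa [abs_of_nonneg hx] using hx1
    have := (Complex.hasSum_taylorSeries_on_ball hd hx').summable.norm
    refine this.congr fun n => ?_
    simp only [smul_eq_mul, sub_zero, norm_mul, norm_pow, Complex.norm_real,
      Real.norm_of_nonneg hx]
    ring
  · intro z hz
    have := Complex.taylorSeries_eq_on_ball' hz hd
    simpa [PwS] using this

end

lemma psum_of_sq {a : ℕ → ℂ} (h : Summable fun n => ‖a n‖ ^ 2) : PwSum a := by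
  intro x hx hx1
  have h2 : Summable fun n : ℕ => (x ^ 2) ^ n :=
    summable_geometric_of_lt_one (by positivity) (by nlinarith)
  refine Summable.of_nonneg_of_le (fun n => by positivity) (fun n => ?_) (h.add h2)
  rw [← pow_mul, mul_comm 2 n, pow_mul]
  nlinarith [sq_nonneg (‖a n‖ - x ^ n), sq_nonneg (‖a n‖), sq_nonneg (x ^ n)]

lemma l2_sq (a : ℓ2) : HasSum (fun n => ‖a n‖ ^ 2) (‖a‖ ^ 2) := by
  have := lp.hasSum_norm (p := 2) (by norm_num) a
  simpa using this

lemma l2_mk {a : ℕ → ℂ} (h : Summable fun n => ‖a n‖ ^ 2) : Memℓp a 2 := by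
  apply memℓp_gen
  simpa using h

/-- Every analytic self-map `φ` of the unit disc induces a well-defined
bounded composition operator `C_φ` on `H²ₕ(𝔻)`, with
`‖C_φ‖ ≤ 2 √((1 + |φ(0)|)/(1 - |φ(0)|))`. -/
theorem stmt_10 (φ : ℂ → ℂ) (hφ : DifferentiableOn ℂ φ (ball (0 : ℂ) 1))
    (hmap : MapsTo φ (ball (0 : ℂ) 1) (ball (0 : ℂ) 1)) :
    (∀ f : Hh, ∃ F : Hh, Represents φ f F) ∧
    ∀ f F : Hh, Represents φ f F →
      ‖F‖ ≤ 2 * Real.sqrt ((1 + ‖φ 0‖) / (1 - ‖φ 0‖)) * ‖f‖ := by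
  have hr1 : ‖φ 0‖ < 1 := by simpa using hmap (show (0 : ℂ) ∈ ball 0 1 by simp)
  have hC : 0 ≤ (1 + ‖φ 0‖) / (1 - ‖φ 0‖) := div_nonneg (by positivity) (by linarith)
  have hA : ∀ f : Hh, HasSum (fun n => ‖aCoef f n‖ ^ 2) (‖f.fst‖ ^ 2) := fun f => l2_sq f.fst
  have hB : ∀ f : Hh, HasSum (fun n => ‖bCoef f n‖ ^ 2) (‖f.snd‖ ^ 2) := fun f => by
    have := l2_sq f.snd
    refine this.congr_fun ?_
    intro n
    simp [bCoef]
  constructor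
  · intro f
    have h1 := psum_of_sq (hA f).summable
    have h2 := psum_of_sq (hB f).summable
    obtain ⟨c, hc, hce⟩ := exists_coef hφ hmap h1
    obtain ⟨d, hd, hde⟩ := exists_coef hφ hmap h2
    have hcs : Summable fun n => ‖c n‖ ^ 2 := summable_of_sum_range_le (fun _ => by positivity)
      (coef_bound hφ hmap h1 (hA f).summable hc hce)
    have hds : Summable fun n => ‖d n‖ ^ 2 := summable_of_sum_range_le (fun _ => by positivity)
      (coef_bound hφ hmap h2 (hB f).summable hd hde)
    refine ⟨(WithLp.equiv 2 (ℓ2 × ℓ2)).symm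
      (⟨c, l2_mk hcs⟩, ⟨fun n => conj (d n), l2_mk (by simpa using hds)⟩), ?_⟩
    intro z hz
    refine ⟨hce z hz, ?_⟩
    have := hde z hz
    simpa [PwS, bCoef] using this
  · intro f F hF
    have k1 : ‖F.fst‖ ^ 2 ≤ (1 + ‖φ 0‖) / (1 - ‖φ 0‖) * ‖f.fst‖ ^ 2 := by
      rw [← (hA F).tsum_eq, ← (hA f).tsum_eq]
      exact Real.tsum_le_of_sum_range_le (fun _ => by positivity)
        (coef_bound hφ hmap (psum_of_sq (hA f).summable) (hA f).summable
          (psum_of_sq (hA F).summable) fun z hz => (hF z hz).1)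
    have k2 : ‖F.snd‖ ^ 2 ≤ (1 + ‖φ 0‖) / (1 - ‖φ 0‖) * ‖f.snd‖ ^ 2 := by
      rw [← (hB F).tsum_eq, ← (hB f).tsum_eq]
      exact Real.tsum_le_of_sum_range_le (fun _ => by positivity)
        (coef_bound hφ hmap (psum_of_sq (hB f).summable) (hB f).summable
          (psum_of_sq (hB F).summable) fun z hz => (hF z hz).2)
    have k3 : ‖F‖ ^ 2 ≤ (1 + ‖φ 0‖) / (1 - ‖φ 0‖) * ‖f‖ ^ 2 := by
      rw [WithLp.prod_norm_sq_eq_of_L2, WithLp.prod_norm_sq_eq_of_L2]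
      linarith
    refine (pow_le_pow_iff_left₀ (norm_nonneg _) (by positivity) two_ne_zero).1 ?_
    rw [mul_pow, mul_pow, Real.sq_sqrt hC]
    have : 0 ≤ (1 + ‖φ 0‖) / (1 - ‖φ 0‖) * ‖f‖ ^ 2 := by positivity
    linarith
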